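/- Let x_0,…,x_N ∈ ℝ^d, let X : [0,N] → ℝ^d be the piecewise linear interpolation of x, and let Z denote the backward sawtooth signature coefficients of X with unit initial datum. Then for every integer 0 ≤ m ≤ N, every n ≥ 2 and every word (j_1,…,j_n) with letters in {1,…,d}: ⟨Z_m,(j_1,…,j_n)⟩ = Σ over compositions I = (I_1,…,I_k) of n with I_1 ≥ 2 of (1/I! − 1/((I_1−1)!·I_2!⋯I_k!))·Σ_{0 ≤ l_1 < ⋯ < l_k < m} ∏_{r=1}^{k} ∏_{p ∈ B_r} Δx_{l_r}^{j_{n+1−p}}, where B_1,…,B_k are the consecutive blocks of {1,…,n} determined by I (so the blocks are applied to the reversed word (j_n,…,j_1)). -/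

import Mathlib

open scoped Nat
open MeasureTheory

/-- The increment `Δx_k^j` of the time series `x`. -/
def seriesIncr {d : ℕ} (x : ℕ → Fin d → ℝ) (k : ℕ) (j : Fin d) : ℝ := x (k + 1) j - x k j

/-- The product of the increments at time `k` over the first `i` letters of the word `w`. -/
def incrProd {d : ℕ} (x : ℕ → Fin d → ℝ) (k : ℕ) (w : ℕ → Fin d) (i : ℕ) : ℝ :=
  ∏ p ∈ Finset.range i, seriesIncr x k (w p)

/-- The polynomial giving the sawtooth coefficients at time `k + u`, in terms of their
values `z` at the integer time `k`. -/
noncomputable def sawtoothPoly {d : ℕ} (x : ℕ → Fin d → ℝ) (z : ℕ → (ℕ → Fin d) → ℝ) (k n : ℕ)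
    (w : ℕ → Fin d) (u : ℝ) : ℝ :=
  (∑ i ∈ Finset.range (n - 1),
    u ^ i / (i ! : ℝ) * (incrProd x k w i * z (n - i) (fun p => w (p + i)))) +
  (u ^ n / (n ! : ℝ) - u ^ (n - 1) / ((n - 1)! : ℝ)) * incrProd x k w n

lemma incrProd_succ_left {d : ℕ} (x : ℕ → Fin d → ℝ) (k : ℕ) (w : ℕ → Fin d) (i : ℕ) :
    incrProd x k w (i + 1) = seriesIncr x k (w 0) * incrProd x k (fun p => w (p + 1)) i := by
  simp only [incrProd, Finset.prod_range_succ', mul_comm]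

lemma hasDerivAt_pow_div_factorial (i : ℕ) (u : ℝ) :
    HasDerivAt (fun v : ℝ => v ^ (i + 1) / ((i + 1)! : ℝ)) (u ^ i / (i ! : ℝ)) u := by
  have h := (hasDerivAt_pow (i + 1) u).div_const ((i + 1)! : ℝ)
  refine h.congr_deriv ?_
  have : (i ! : ℝ) ≠ 0 := by positivity
  rw [Nat.factorial_succ]
  push_cast [Nat.add_sub_cancel]
  field_simp

lemma sawtoothPoly_zero {d : ℕ} (x : ℕ → Fin d → ℝ) (z : ℕ → (ℕ → Fin d) → ℝ) (k n : ℕ)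
    (w : ℕ → Fin d) : sawtoothPoly x z k (n + 2) w 0 = z (n + 2) w := by
  simp [sawtoothPoly, Finset.sum_range_succ', incrProd]

lemma hasDerivAt_sawtoothPoly {d : ℕ} (x : ℕ → Fin d → ℝ) (z : ℕ → (ℕ → Fin d) → ℝ) (k n : ℕ)
    (w : ℕ → Fin d) (u : ℝ) :
    HasDerivAt (sawtoothPoly x z k (n + 2) w)
      (seriesIncr x k (w 0) * sawtoothPoly x z k (n + 1) (fun p => w (p + 1)) u) u := by
  have hsum := HasDerivAt.fun_sum (u := Finset.range n) (fun i _ =>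
    (hasDerivAt_pow_div_factorial i u).mul_const
      (incrProd x k w (i + 1) * z (n + 2 - (i + 1)) (fun p => w (p + (i + 1)))))
  have h := (hsum.add_const (z (n + 2) w)).add
    (((hasDerivAt_pow_div_factorial (n + 1) u).sub
      (hasDerivAt_pow_div_factorial n u)).mul_const (incrProd x k w (n + 2)))
  refine HasDerivAt.congr_of_eventuallyEq (h.congr_deriv ?_) (Filter.Eventually.of_forall ?_)
  rotate_left
  · intro v
    simp [sawtoothPoly, Finset.sum_range_succ', incrProd]
  · simp only [sawtoothPoly, incrProd_succ_left, mul_add, Finset.mul_sum, Nat.add_sub_cancel]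
    congr 1
    · refine Finset.sum_congr rfl fun i _ => ?_
      rw [show n + 2 - (i + 1) = n + 1 - i by omega]
      simp only [← add_assoc, add_right_comm _ i 1]
      ring
    · ring

lemma continuous_sawtoothPoly {d : ℕ} (x : ℕ → Fin d → ℝ) (z : ℕ → (ℕ → Fin d) → ℝ) (k n : ℕ)
    (w : ℕ → Fin d) : Continuous (sawtoothPoly x z k n w) := by
  unfold sawtoothPoly
  fun_prop

lemma deriv_interpolation {d : ℕ} {N : ℕ} {x : ℕ → Fin d → ℝ} {X : ℝ → Fin d → ℝ}
    (hX : ∀ t ∈ Set.Icc (0:ℝ) (N:ℝ), ∀ j : Fin d,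
      X t j = x ⌊t⌋.toNat j + (t - ⌊t⌋) * (x (⌊t⌋.toNat + 1) j - x ⌊t⌋.toNat j))
    {k : ℕ} (hk : k < N) (j : Fin d) {s : ℝ} (hs : s ∈ Set.Ioo (k : ℝ) (k + 1)) :
    deriv (fun r => X r j) s = seriesIncr x k j := by
  have hkN : (k : ℝ) + 1 ≤ N := by exact_mod_cast hk
  have h : (fun r => X r j) =ᶠ[nhds s] fun r => x k j + (r - k) * seriesIncr x k j := by
    filter_upwards [Ioo_mem_nhds hs.1 hs.2] with r hr
    have hf : ⌊r⌋ = (k : ℤ) := Int.floor_eq_iff.2 ⟨by simpa using hr.1.le, by simpa using hr.2⟩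
    have hk0 : (0 : ℝ) ≤ k := Nat.cast_nonneg k
    rw [hX r ⟨hk0.trans hr.1.le, hr.2.le.trans hkN⟩, hf]
    simp [seriesIncr]
  rw [h.deriv_eq]
  simp

lemma sawtooth_one_eq_poly {d : ℕ} {N : ℕ} {x : ℕ → Fin d → ℝ} {X : ℝ → Fin d → ℝ}
    (hX : ∀ t ∈ Set.Icc (0:ℝ) (N:ℝ), ∀ j : Fin d,
      X t j = x ⌊t⌋.toNat j + (t - ⌊t⌋) * (x (⌊t⌋.toNat + 1) j - x ⌊t⌋.toNat j))
    {Z : ℕ → (ℕ → Fin d) → ℝ → ℝ}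
    (hZ1 : ∀ (w : ℕ → Fin d), ∀ t ∈ Set.Icc (0:ℝ) (N:ℝ),
      Z 1 w t = X t (w 0) - X ((⌊t⌋ : ℝ) + 1) (w 0))
    (w : ℕ → Fin d) {k : ℕ} (hk : k < N) {t : ℝ} (ht : t ∈ Set.Ico (k : ℝ) (k + 1)) :
    Z 1 w t = sawtoothPoly x (fun n w => Z n w k) k 1 w (t - k) := by
  have hkN : (k : ℝ) + 1 ≤ N := by exact_mod_cast hk
  have hk0 : (0 : ℝ) ≤ k := Nat.cast_nonneg k
  have hf : ⌊t⌋ = (k : ℤ) := Int.floor_eq_iff.2 ⟨by simpa using ht.1, by simpa using ht.2⟩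
  have htN : t ∈ Set.Icc (0 : ℝ) N := ⟨hk0.trans ht.1, ht.2.le.trans hkN⟩
  have hf1 : ⌊((k : ℝ) + 1)⌋ = (k : ℤ) + 1 := by simp
  rw [hZ1 w t htN, hX t htN, hf]
  simp only [Int.cast_natCast, Int.toNat_natCast]
  rw [hX _ ⟨by positivity, hkN⟩, hf1]
  have : ((k : ℤ) + 1).toNat = k + 1 := by omega
  simp [sawtoothPoly, incrProd, seriesIncr, this]
  ring

lemma sawtooth_succ_eq_poly {d : ℕ} {N : ℕ} {x : ℕ → Fin d → ℝ} {X : ℝ → Fin d → ℝ}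
    (hX : ∀ t ∈ Set.Icc (0:ℝ) (N:ℝ), ∀ j : Fin d,
      X t j = x ⌊t⌋.toNat j + (t - ⌊t⌋) * (x (⌊t⌋.toNat + 1) j - x ⌊t⌋.toNat j))
    {Z : ℕ → (ℕ → Fin d) → ℝ → ℝ}
    (hZrec : ∀ n, 2 ≤ n → ∀ (w : ℕ → Fin d), ∀ t ∈ Set.Icc (0:ℝ) (N:ℝ),
      Z n w t = ∫ s in (0:ℝ)..t,
        deriv (fun r => X r (w 0)) s * Z (n - 1) (fun i => w (i + 1)) s)
    (n : ℕ)
    (ih : ∀ (w : ℕ → Fin d) (k : ℕ), k < N → ∀ t ∈ Set.Ico (k : ℝ) (k + 1),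
      Z (n + 1) w t = sawtoothPoly x (fun n w => Z n w k) k (n + 1) w (t - k))
    (w : ℕ → Fin d) {k : ℕ} (hk : k < N) {t : ℝ} (ht : t ∈ Set.Icc (k : ℝ) (k + 1)) :
    Z (n + 2) w t = sawtoothPoly x (fun n w => Z n w k) k (n + 2) w (t - k) := by
  have hkN : (k : ℝ) + 1 ≤ N := by exact_mod_cast hk
  have hk0 : (0 : ℝ) ≤ k := Nat.cast_nonneg k
  set g : ℝ → ℝ := fun s => deriv (fun r => X r (w 0)) s * Z (n + 1) (fun i => w (i + 1)) s
    with hg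
  set q : ℕ → ℝ → ℝ := fun l s => seriesIncr x l (w 0) *
    sawtoothPoly x (fun n w => Z n w l) l (n + 1) (fun i => w (i + 1)) (s - l) with hq
  have hqc : ∀ l, Continuous (q l) := fun l =>
    continuous_const.mul
      ((continuous_sawtoothPoly _ _ _ _ _).comp (continuous_id.sub continuous_const))
  have hgq : ∀ l < N, ∀ s ∈ Set.Ioo (l : ℝ) (l + 1), q l s = g s := by
    intro l hl s hs
    simp only [hg, hq]
    rw [deriv_interpolation hX hl _ hs, ih _ l hl s ⟨hs.1.le, hs.2⟩]
  have integrable_step : ∀ l < N, IntervalIntegrable g volume l (l + 1 : ℝ) := by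
    intro l hl
    refine ((hqc l).intervalIntegrable _ _).congr_uIoo ?_
    rw [Set.uIoo_of_le (by linarith)]
    exact hgq l hl
  have integrable_left : IntervalIntegrable g volume 0 (k : ℝ) := by
    have := IntervalIntegrable.trans_iterate (f := g) (μ := volume) (a := fun i : ℕ => (i : ℝ))
      (n := k) (fun l hl => by simpa using integrable_step l (hl.trans hk))
    simpa using this
  have integrable_right : IntervalIntegrable g volume k t :=
    (integrable_step k hk).mono_set (by
      rw [Set.uIcc_of_le ht.1, Set.uIcc_of_le (by linarith)]
      exact Set.Icc_subset_Icc_right ht.2)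
  have hsplit : Z (n + 2) w t = Z (n + 2) w k + ∫ s in (k : ℝ)..t, g s := by
    rw [hZrec (n + 2) (by omega) w t ⟨hk0.trans ht.1, ht.2.trans hkN⟩,
      hZrec (n + 2) (by omega) w k ⟨hk0, by linarith⟩]
    exact (intervalIntegral.integral_add_adjacent_intervals integrable_left integrable_right).symm
  have hcongr : ∫ s in (k : ℝ)..t, g s = ∫ s in (k : ℝ)..t, q k s := by
    refine (intervalIntegral.integral_congr_uIoo ?_).symm
    rw [Set.uIoo_of_le ht.1]
    exact fun s hs => hgq k hk s ⟨hs.1, hs.2.trans_le ht.2⟩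
  have hftc := intervalIntegral.integral_eq_sub_of_hasDerivAt (a := (k : ℝ)) (b := t) (f' := q k)
    (f := fun s => sawtoothPoly x (fun n w => Z n w k) k (n + 2) w (s - k))
    (fun s _ => (hasDerivAt_sawtoothPoly x _ k n w (s - k)).comp_sub_const s (k : ℝ))
    ((hqc k).intervalIntegrable _ _)
  rw [hsplit, hcongr, hftc, sub_self, sawtoothPoly_zero]
  ring

lemma sawtooth_add_one_eq_poly {d : ℕ} {N : ℕ} {x : ℕ → Fin d → ℝ} {X : ℝ → Fin d → ℝ}
    (hX : ∀ t ∈ Set.Icc (0:ℝ) (N:ℝ), ∀ j : Fin d,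
      X t j = x ⌊t⌋.toNat j + (t - ⌊t⌋) * (x (⌊t⌋.toNat + 1) j - x ⌊t⌋.toNat j))
    {Z : ℕ → (ℕ → Fin d) → ℝ → ℝ}
    (hZ1 : ∀ (w : ℕ → Fin d), ∀ t ∈ Set.Icc (0:ℝ) (N:ℝ),
      Z 1 w t = X t (w 0) - X ((⌊t⌋ : ℝ) + 1) (w 0))
    (hZrec : ∀ n, 2 ≤ n → ∀ (w : ℕ → Fin d), ∀ t ∈ Set.Icc (0:ℝ) (N:ℝ),
      Z n w t = ∫ s in (0:ℝ)..t,
        deriv (fun r => X r (w 0)) s * Z (n - 1) (fun i => w (i + 1)) s)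
    (n : ℕ) (w : ℕ → Fin d) {k : ℕ} (hk : k < N) :
    Z (n + 2) w (k + 1 : ℕ) = sawtoothPoly x (fun n w => Z n w k) k (n + 2) w 1 := by
  have key : ∀ n (w : ℕ → Fin d) (k : ℕ), k < N → ∀ t ∈ Set.Ico (k : ℝ) (k + 1),
      Z (n + 1) w t = sawtoothPoly x (fun n w => Z n w k) k (n + 1) w (t - k) := by
    intro n
    induction n with
    | zero => exact fun w k hk t ht => sawtooth_one_eq_poly hX hZ1 w hk ht
    | succ n ih => exact fun w k hk t ht =>
        sawtooth_succ_eq_poly hX hZrec n ih w hk (Set.Ico_subset_Icc_self ht)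
  have h := sawtooth_succ_eq_poly hX hZrec n (key n) w hk (t := ((k + 1 : ℕ) : ℝ))
    ⟨by push_cast; linarith, by push_cast; linarith⟩
  rw [h]
  congr 1
  push_cast
  ring

/-- The strictly increasing `k`-tuples of natural numbers less than `m`. -/
def strictTuples (k m : ℕ) : Finset (Fin k → ℕ) :=
  (Fintype.piFinset fun _ => Finset.range m).filter fun l => ∀ i j, i < j → l i < l j

lemma mem_strictTuples {k m : ℕ} {l : Fin k → ℕ} :
    l ∈ strictTuples k m ↔ (∀ i, l i < m) ∧ StrictMono l := by
  simp [strictTuples, StrictMono]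

lemma strictTuples_succ_succ (k m : ℕ) :
    strictTuples (k + 1) (m + 1) = strictTuples (k + 1) m ∪
      (strictTuples k m).image fun l => (Fin.snoc l m : Fin (k + 1) → ℕ) := by
  ext l
  simp only [Finset.mem_union, Finset.mem_image, mem_strictTuples]
  constructor
  · rintro ⟨hb, hl⟩
    by_cases h : l (Fin.last k) = m
    · refine Or.inr ⟨fun i => l i.castSucc, ⟨fun i => ?_, fun i j hij => hl ?_⟩, ?_⟩
      · exact h ▸ hl (Fin.castSucc_lt_last i)
      · simpa using hij
      · rw [← h]
        exact Fin.snoc_init_self l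
    · refine Or.inl ⟨fun i => ?_, hl⟩
      have h1 := hl.monotone (Fin.le_last i)
      have h2 := hb (Fin.last k)
      omega
  · rintro (⟨hb, hl⟩ | ⟨l, ⟨hb, hl⟩, rfl⟩)
    · exact ⟨fun i => (hb i).trans (Nat.lt_succ_self m), hl⟩
    · refine ⟨fun i => ?_, fun i j hij => ?_⟩
      · induction i using Fin.lastCases with
        | last => simp
        | cast i => simpa using (hb i).trans (Nat.lt_succ_self m)
      · induction i using Fin.lastCases with
        | last => exact absurd hij (Fin.le_last j).not_gt
        | cast i =>
          induction j using Fin.lastCases with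
          | last => simpa using hb i
          | cast j => simpa using hl (by simpa using hij)

/-- The iterated sum of `∏_r f r (l r)` over strictly increasing `k`-tuples `l` below `m`. -/
def iteratedSum (k m : ℕ) (f : ℕ → ℕ → ℝ) : ℝ :=
  ∑ l ∈ strictTuples k m, ∏ r : Fin k, f r (l r)

lemma iteratedSum_zero_left (m : ℕ) (f : ℕ → ℕ → ℝ) : iteratedSum 0 m f = 1 := by
  have : strictTuples 0 m = Finset.univ := by
    ext l
    simp [mem_strictTuples, Subsingleton.strictMono, eq_iff_true_of_subsingleton]
  simp [iteratedSum, this]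

lemma iteratedSum_zero_right (k : ℕ) (f : ℕ → ℕ → ℝ) : iteratedSum (k + 1) 0 f = 0 := by
  refine Finset.sum_eq_zero fun l hl => ?_
  exact absurd ((mem_strictTuples.1 hl).1 0) (Nat.not_lt_zero _)

lemma iteratedSum_succ_succ (k m : ℕ) (f : ℕ → ℕ → ℝ) :
    iteratedSum (k + 1) (m + 1) f = iteratedSum (k + 1) m f + f k m * iteratedSum k m f := by
  unfold iteratedSum
  rw [strictTuples_succ_succ, Finset.sum_union, Finset.sum_image, Finset.mul_sum]
  · congr 1
    refine Finset.sum_congr rfl fun l _ => ?_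
    rw [Fin.prod_univ_castSucc]
    simp [mul_comm]
  · intro l _ l' _ h
    exact (Fin.snoc_injective2 h).1
  · rw [Finset.disjoint_left]
    intro l hl hl'
    obtain ⟨l', _, rfl⟩ := Finset.mem_image.1 hl'
    have := (mem_strictTuples.1 hl).1 (Fin.last k)
    simp at this

lemma iteratedSum_congr {k m : ℕ} {f g : ℕ → ℕ → ℝ} (h : ∀ r < k, ∀ l, f r l = g r l) :
    iteratedSum k m f = iteratedSum k m g :=
  Finset.sum_congr rfl fun l _ => Finset.prod_congr rfl fun r _ => h r r.2 (l r)

lemma sum_strictMono_eq_iteratedSum (k m : ℕ) (f : ℕ → ℕ → ℝ) :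
    ∑ l ∈ Finset.univ.filter (fun l : Fin k → Fin m => StrictMono l),
      ∏ r : Fin k, f r (l r) = iteratedSum k m f := by
  refine Finset.sum_bij' (fun l _ r => (l r : ℕ))
    (fun l hl r => ⟨l r, (mem_strictTuples.1 hl).1 r⟩) ?_ ?_ ?_ ?_ ?_
  · intro l hl
    exact mem_strictTuples.2 ⟨fun i => (l i).2, fun i j hij => (Finset.mem_filter.1 hl).2 hij⟩
  · intro l hl
    exact Finset.mem_filter.2 ⟨Finset.mem_univ _, fun i j hij => (mem_strictTuples.1 hl).2 hij⟩
  · intros; rfl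
  · intros; rfl
  · intros; rfl

/-- The coefficient `1 / I! - 1 / ((I_1 - 1)! I_2! ⋯ I_k!)` of the composition with blocks `B`. -/
noncomputable def blockCoeff (B : List ℕ) : ℝ :=
  1 / ((B.map Nat.factorial).prod : ℝ)
    - 1 / ((((B.headI - 1)! * (B.tail.map Nat.factorial).prod : ℕ)) : ℝ)

lemma blockCoeff_append_singleton {B : List ℕ} (hB : B ≠ []) (b : ℕ) :
    blockCoeff (B ++ [b]) = 1 / (b ! : ℝ) * blockCoeff B := by
  obtain ⟨a, B, rfl⟩ := List.exists_cons_of_ne_nil hB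
  simp [blockCoeff]
  ring

/-- The product over the block `r` of `B`, applied to the reversed word, of the increments
at time `l`. -/
def blockProd {d : ℕ} (x : ℕ → Fin d → ℝ) (w : ℕ → Fin d) (B : List ℕ) (r l : ℕ) : ℝ :=
  ∏ q ∈ Finset.range (B.getD r 0), seriesIncr x l (w (B.sum - 1 - ((B.take r).sum + q)))

lemma blockProd_append_last {d : ℕ} (x : ℕ → Fin d → ℝ) (w : ℕ → Fin d) (B : List ℕ) (b l : ℕ) :
    blockProd x w (B ++ [b]) B.length l = incrProd x l w b := by
  rw [incrProd, ← Finset.prod_range_reflect]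
  simp only [blockProd, List.getD_append_right _ _ _ _ le_rfl, List.take_left, List.sum_append]
  simp only [Nat.sub_self, List.getD_cons_zero, List.sum_singleton]
  refine Finset.prod_congr rfl fun q _ => ?_
  rw [show B.sum + b - 1 - (B.sum + q) = b - 1 - q by omega]

lemma blockProd_append_of_lt {d : ℕ} (x : ℕ → Fin d → ℝ) (w : ℕ → Fin d) (B : List ℕ) (b l : ℕ)
    {r : ℕ} (hr : r < B.length) :
    blockProd x w (B ++ [b]) r l = blockProd x (fun p => w (p + b)) B r l := by
  simp only [blockProd, List.getD_append _ _ _ _ hr, List.take_append_of_le_length hr.le,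
    List.sum_append, List.sum_singleton]
  refine Finset.prod_congr rfl fun q hq => ?_
  have h1 : (B.take r).sum + B.getD r 0 ≤ B.sum := by
    rw [List.getD_eq_getElem _ _ hr, ← List.sum_take_succ _ _ hr]
    exact (List.take_sublist _ _).sum_le_sum (by simp)
  have h2 := Finset.mem_range.1 hq
  rw [show B.sum + b - 1 - ((B.take r).sum + q) = B.sum - 1 - ((B.take r).sum + q) + b by omega]

/-- The contribution of the composition with blocks `B` to the sawtooth coefficient at time `m`. -/
noncomputable def blockTerm {d : ℕ} (x : ℕ → Fin d → ℝ) (m : ℕ) (w : ℕ → Fin d) (B : List ℕ) : ℝ :=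
  blockCoeff B * iteratedSum B.length m (blockProd x w B)

lemma blockTerm_zero {d : ℕ} (x : ℕ → Fin d → ℝ) (w : ℕ → Fin d) {B : List ℕ} (hB : B ≠ []) :
    blockTerm x 0 w B = 0 := by
  obtain ⟨a, B, rfl⟩ := List.exists_cons_of_ne_nil hB
  simp [blockTerm, iteratedSum_zero_right]

lemma blockTerm_singleton_succ {d : ℕ} (x : ℕ → Fin d → ℝ) (m : ℕ) (w : ℕ → Fin d) (n : ℕ) :
    blockTerm x (m + 1) w [n] = blockTerm x m w [n] +
      (1 / (n ! : ℝ) - 1 / ((n - 1)! : ℝ)) * incrProd x m w n := by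
  have h := blockProd_append_last x w [] n m
  simp only [List.nil_append, List.length_nil] at h
  simp only [blockTerm, List.length_singleton, iteratedSum_succ_succ, iteratedSum_zero_left, h]
  simp [blockCoeff]
  ring

lemma blockTerm_append_succ {d : ℕ} (x : ℕ → Fin d → ℝ) (m : ℕ) (w : ℕ → Fin d) {B : List ℕ}
    (hB : B ≠ []) (b : ℕ) :
    blockTerm x (m + 1) w (B ++ [b]) = blockTerm x m w (B ++ [b]) +
      1 / (b ! : ℝ) * (incrProd x m w b * blockTerm x m (fun p => w (p + b)) B) := by
  simp only [blockTerm, List.length_append, List.length_singleton, iteratedSum_succ_succ,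
    blockProd_append_last, blockCoeff_append_singleton hB]
  rw [iteratedSum_congr fun r hr l => blockProd_append_of_lt x w B b l hr]
  ring

/-- The block lists of the compositions of `n` whose first part is at least `2`. -/
def headTwoBlocks (n : ℕ) : Finset (List ℕ) :=
  (Finset.univ.filter fun c : Composition n => 2 ≤ c.blocks.headI).image Composition.blocks

lemma mem_headTwoBlocks {n : ℕ} {B : List ℕ} :
    B ∈ headTwoBlocks n ↔ (∀ b ∈ B, 0 < b) ∧ B.sum = n ∧ 2 ≤ B.headI := by
  simp only [headTwoBlocks, Finset.mem_image, Finset.mem_filter, Finset.mem_univ, true_and]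
  constructor
  · rintro ⟨c, hc, rfl⟩
    exact ⟨fun b hb => c.blocks_pos hb, c.blocks_sum, hc⟩
  · rintro ⟨hpos, hsum, hhead⟩
    exact ⟨⟨B, fun {i} hi => hpos i hi, hsum⟩, hhead, rfl⟩

lemma ne_nil_of_mem_headTwoBlocks {n : ℕ} {B : List ℕ} (h : B ∈ headTwoBlocks n) : B ≠ [] := by
  rintro rfl
  simpa using (mem_headTwoBlocks.1 h).2.2

lemma headTwoBlocks_eq (n : ℕ) :
    headTwoBlocks (n + 2) = insert [n + 2] ((Finset.range n).biUnion fun i =>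
      (headTwoBlocks (n + 2 - (i + 1))).image fun B => B ++ [i + 1]) := by
  ext L
  simp only [Finset.mem_insert, Finset.mem_biUnion, Finset.mem_range, Finset.mem_image]
  constructor
  · intro hL
    obtain ⟨hpos, hsum, hhead⟩ := mem_headTwoBlocks.1 hL
    obtain ⟨B, b, rfl⟩ : ∃ B b, L = B ++ [b] :=
      ⟨_, _, (List.dropLast_append_getLast (ne_nil_of_mem_headTwoBlocks hL)).symm⟩
    rcases B with _ | ⟨a, B⟩
    · left
      simpa using hsum
    · right
      have hb : 0 < b := hpos b (by simp)
      simp only [List.cons_append, List.headI_cons, List.sum_cons, List.sum_append,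
        List.sum_nil] at hhead hsum
      refine ⟨b - 1, by omega, a :: B, mem_headTwoBlocks.2 ⟨?_, ?_, hhead⟩, ?_⟩
      · exact fun c hc => hpos c (List.mem_append_left _ hc)
      · simp only [List.sum_cons]
        omega
      · rw [Nat.sub_add_cancel hb]
  · rintro (rfl | ⟨i, hi, B, hB, rfl⟩)
    · simp [mem_headTwoBlocks]
    · obtain ⟨a, B, rfl⟩ := List.exists_cons_of_ne_nil (ne_nil_of_mem_headTwoBlocks hB)
      obtain ⟨hpos, hsum, hhead⟩ := mem_headTwoBlocks.1 hB
      refine mem_headTwoBlocks.2 ⟨?_, ?_, hhead⟩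
      · intro c hc
        rcases List.mem_append.1 hc with h | h
        · exact hpos c h
        · rw [List.mem_singleton.1 h]
          omega
      · rw [List.sum_append, hsum, List.sum_singleton]
        omega

lemma sum_headTwoBlocks (n : ℕ) (g : List ℕ → ℝ) :
    ∑ B ∈ headTwoBlocks (n + 2), g B = g [n + 2] +
      ∑ i ∈ Finset.range n, ∑ B ∈ headTwoBlocks (n + 2 - (i + 1)), g (B ++ [i + 1]) := by
  rw [headTwoBlocks_eq, Finset.sum_insert, Finset.sum_biUnion]
  · refine congrArg (g [n + 2] + ·) (Finset.sum_congr rfl fun i _ => ?_)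
    rw [Finset.sum_image]
    exact fun B _ B' _ h => List.append_cancel_right h
  · intro i _ j _ hij
    refine Finset.disjoint_left.2 fun L hi hj => hij ?_
    obtain ⟨B, _, rfl⟩ := Finset.mem_image.1 hi
    obtain ⟨B', _, h⟩ := Finset.mem_image.1 hj
    have := (List.append_inj' h rfl).2
    simpa using this.symm
  · intro h
    simp only [Finset.mem_biUnion, Finset.mem_range, Finset.mem_image] at h
    obtain ⟨i, hi, B, hB, h⟩ := h
    have h' : B ++ [i + 1] = [] ++ [n + 2] := h
    have := (List.append_inj' h' rfl).1
    exact ne_nil_of_mem_headTwoBlocks hB this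

lemma sum_blockTerm_succ {d : ℕ} (x : ℕ → Fin d → ℝ) (m n : ℕ) (w : ℕ → Fin d) :
    ∑ B ∈ headTwoBlocks (n + 2), blockTerm x (m + 1) w B =
      sawtoothPoly x (fun n w => ∑ B ∈ headTwoBlocks n, blockTerm x m w B) m (n + 2) w 1 := by
  have h : ∀ i ∈ Finset.range n, ∑ B ∈ headTwoBlocks (n + 2 - (i + 1)),
      blockTerm x (m + 1) w (B ++ [i + 1]) =
      ∑ B ∈ headTwoBlocks (n + 2 - (i + 1)), blockTerm x m w (B ++ [i + 1]) +
      1 / ((i + 1)! : ℝ) * (incrProd x m w (i + 1) *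
        ∑ B ∈ headTwoBlocks (n + 2 - (i + 1)), blockTerm x m (fun p => w (p + (i + 1))) B) := by
    intro i _
    rw [Finset.mul_sum, Finset.mul_sum, ← Finset.sum_add_distrib]
    exact Finset.sum_congr rfl fun B hB =>
      blockTerm_append_succ x m w (ne_nil_of_mem_headTwoBlocks hB) (i + 1)
  rw [sum_headTwoBlocks, Finset.sum_congr rfl h, Finset.sum_add_distrib, blockTerm_singleton_succ,
    sawtoothPoly, show n + 2 - 1 = n + 1 by omega, Finset.sum_range_succ']
  simp only [one_pow, Nat.sub_zero, Nat.factorial_zero, Nat.cast_one, add_zero]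
  rw [sum_headTwoBlocks n (blockTerm x m w)]
  simp only [incrProd, Finset.range_zero, Finset.prod_empty]
  ring

lemma sawtooth_eq_sum_blockTerm {d : ℕ} {N : ℕ} {x : ℕ → Fin d → ℝ} {X : ℝ → Fin d → ℝ}
    (hX : ∀ t ∈ Set.Icc (0:ℝ) (N:ℝ), ∀ j : Fin d,
      X t j = x ⌊t⌋.toNat j + (t - ⌊t⌋) * (x (⌊t⌋.toNat + 1) j - x ⌊t⌋.toNat j))
    {Z : ℕ → (ℕ → Fin d) → ℝ → ℝ}
    (hZ1 : ∀ (w : ℕ → Fin d), ∀ t ∈ Set.Icc (0:ℝ) (N:ℝ),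
      Z 1 w t = X t (w 0) - X ((⌊t⌋ : ℝ) + 1) (w 0))
    (hZrec : ∀ n, 2 ≤ n → ∀ (w : ℕ → Fin d), ∀ t ∈ Set.Icc (0:ℝ) (N:ℝ),
      Z n w t = ∫ s in (0:ℝ)..t,
        deriv (fun r => X r (w 0)) s * Z (n - 1) (fun i => w (i + 1)) s)
    (m : ℕ) (hm : m ≤ N) (n : ℕ) (w : ℕ → Fin d) :
    Z (n + 2) w m = ∑ B ∈ headTwoBlocks (n + 2), blockTerm x m w B := by
  induction m generalizing n w with
  | zero =>
    rw [hZrec (n + 2) (by omega) w _ (by simp), Nat.cast_zero, intervalIntegral.integral_same]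
    exact (Finset.sum_eq_zero fun B hB =>
      blockTerm_zero x w (ne_nil_of_mem_headTwoBlocks hB)).symm
  | succ m ih =>
    rw [sawtooth_add_one_eq_poly hX hZ1 hZrec n w hm, sum_blockTerm_succ, sawtoothPoly,
      sawtoothPoly]
    congr 1
    refine Finset.sum_congr rfl fun i hi => ?_
    have hi' := Finset.mem_range.1 hi
    rw [show n + 2 - i = (n - i) + 2 by omega, ih (by omega)]

/-- The backward sawtooth signature coefficients (unit initial datum) of the piecewise
linear interpolation of a time series `x`, evaluated at integer times, as a sum over
compositions whose first part is at least `2`, applied to the reversed word. -/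
theorem sawtooth_signature_at_integers {d : ℕ} (N : ℕ) (hN : 1 ≤ N)
    (x : ℕ → Fin d → ℝ) (X : ℝ → Fin d → ℝ)
    (hX : ∀ t ∈ Set.Icc (0:ℝ) (N:ℝ), ∀ j : Fin d,
      X t j = x ⌊t⌋.toNat j + (t - ⌊t⌋) * (x (⌊t⌋.toNat + 1) j - x ⌊t⌋.toNat j))
    (Z : ℕ → (ℕ → Fin d) → ℝ → ℝ)
    (hZ1 : ∀ (w : ℕ → Fin d), ∀ t ∈ Set.Icc (0:ℝ) (N:ℝ),
      Z 1 w t = X t (w 0) - X ((⌊t⌋ : ℝ) + 1) (w 0))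
    (hZrec : ∀ n, 2 ≤ n → ∀ (w : ℕ → Fin d), ∀ t ∈ Set.Icc (0:ℝ) (N:ℝ),
      Z n w t = ∫ s in (0:ℝ)..t,
        deriv (fun r => X r (w 0)) s * Z (n - 1) (fun i => w (i + 1)) s)
    (m : ℕ) (hm : m ≤ N) (n : ℕ) (hn : 2 ≤ n) (w : ℕ → Fin d) :
    Z n w (m : ℝ) =
      ∑ c ∈ Finset.univ.filter (fun c : Composition n => 2 ≤ c.blocks.headI),
        (1 / ((c.blocks.map Nat.factorial).prod : ℝ)
          - 1 / ((((c.blocks.headI - 1)! * (c.blocks.tail.map Nat.factorial).prod : ℕ)) : ℝ)) *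
          ∑ l ∈ Finset.univ.filter (fun l : Fin c.length → Fin m => StrictMono l),
            ∏ r : Fin c.length, ∏ q : Fin (c.blocksFun r),
              (x ((l r : ℕ) + 1) (w (n - 1 - (c.sizeUpTo r + q))) -
                x (l r : ℕ) (w (n - 1 - (c.sizeUpTo r + q)))) := by
  obtain ⟨n, rfl⟩ := Nat.exists_eq_add_of_le' hn
  rw [sawtooth_eq_sum_blockTerm hX hZ1 hZrec m hm n w, headTwoBlocks,
    Finset.sum_image fun c _ c' _ h => Composition.ext h]
  refine Finset.sum_congr rfl fun c _ => ?_
  rw [blockTerm, blockCoeff, ← sum_strictMono_eq_iteratedSum]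
  congr 1
  refine Finset.sum_congr rfl fun l _ => Finset.prod_congr rfl fun r _ => ?_
  rw [blockProd, List.getD_eq_getElem _ _ r.2, c.blocks_sum]
  exact Finset.prod_range fun q =>
    seriesIncr x (l r) (w (n + 2 - 1 - (c.sizeUpTo r + q)))
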